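/- Let T be a rooted tree on the vertex set of a flow graph G that has the parent property, and let G' be the derived graph of G with respect to T. If G is acyclic, then G' is acyclic. -/

import Mathlib

variable {V : Type*}

/-- `IsWalk A u v p`: `p` is a path from `u` to `v` in the digraph with arc
relation `A`, listing all of its vertices in order. -/
def IsWalk (A : V → V → Prop) (u v : V) (p : List V) : Prop :=
  p.Chain' A ∧ p.head? = some u ∧ p.getLast? = some v

/-- A flow graph: a directed graph with arc relation `A` and start vertex `s`
such that every vertex is reachable from `s` and no arc enters `s`. -/
structure FlowGraph (V : Type*) where
  A : V → V → Prop
  s : V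
  reach : ∀ v : V, ∃ p : List V, IsWalk A s v p
  no_enter : ∀ v : V, ¬ A v s

/-- `DomOn A s v w`: `v` lies on every path from `s` to `w` in the digraph with
arc relation `A`. -/
def DomOn (A : V → V → Prop) (s v w : V) : Prop :=
  ∀ p : List V, IsWalk A s w p → v ∈ p

/-- `v` dominates `w` in the flow graph `G`. -/
def FlowGraph.Dom (G : FlowGraph V) (v w : V) : Prop :=
  DomOn G.A G.s v w

/-- A rooted tree on vertex set `V`, given by a parent function: the root is a
fixed point of the parent function, and iterating the parent function from any
vertex eventually reaches the root. -/
structure ParentTree (V : Type*) where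
  parent : V → V
  root : V
  parent_root : parent root = root
  reaches_root : ∀ v : V, ∃ n : ℕ, parent^[n] v = root

/-- `T.Anc x y`: `x` is an ancestor of `y` in the rooted tree `T` (every vertex
is an ancestor of itself). -/
def ParentTree.Anc (T : ParentTree V) (x y : V) : Prop :=
  ∃ n : ℕ, T.parent^[n] y = x

/-- `T` has the parent property with respect to `G`: for every arc `(v, w)`,
the parent of `w` is an ancestor of `v` in `T`. -/
def ParentProperty (G : FlowGraph V) (T : ParentTree V) : Prop :=
  ∀ v w : V, G.A v w → T.Anc (T.parent w) v

/-- The sibling property with respect to an arbitrary arc relation `A` with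
start vertex `s`: no non-root vertex dominates a distinct vertex with the same
parent. -/
def SiblingPropertyOn (A : V → V → Prop) (s : V) (T : ParentTree V) : Prop :=
  ∀ v w : V, v ≠ T.root → w ≠ T.root → v ≠ w → T.parent v = T.parent w →
    ¬ DomOn A s v w

/-- `T` has the sibling property with respect to the flow graph `G`. -/
def SiblingProperty (G : FlowGraph V) (T : ParentTree V) : Prop :=
  SiblingPropertyOn G.A G.s T

/-- `T` is the dominator tree of the digraph with arc relation `A` and start
vertex `s`: `T` is rooted at `s`, and the parent of every vertex `v ≠ s` is its
immediate dominator, i.e. a strict dominator of `v` that is dominated by every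
strict dominator of `v`. -/
def IsDomTreeOn (A : V → V → Prop) (s : V) (T : ParentTree V) : Prop :=
  T.root = s ∧ ∀ v : V, v ≠ s →
    DomOn A s (T.parent v) v ∧ T.parent v ≠ v ∧
    ∀ u : V, DomOn A s u v → u ≠ v → DomOn A s u (T.parent v)

/-- `T` is the dominator tree of the flow graph `G`. -/
def IsDomTree (G : FlowGraph V) (T : ParentTree V) : Prop :=
  IsDomTreeOn G.A G.s T

/-- `ord` is (the numbering of) a preorder of the rooted tree `T`: an injective
numbering of the vertices such that for every vertex `v` the descendants of `v`
are ordered consecutively, with `v` first. -/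
def IsTreePreorder (T : ParentTree V) (ord : V → ℕ) : Prop :=
  Function.Injective ord ∧
  (∀ v x : V, T.Anc v x → ord v ≤ ord x) ∧
  (∀ v x y z : V, T.Anc v x → T.Anc v z → ord x ≤ ord y → ord y ≤ ord z →
    T.Anc v y)

/-- A preorder `ord` of `T` is low-high on the digraph with arc relation `A`
and start vertex `s`: for every `v ≠ s`, either `(t(v), v)` is an arc, or there
are arcs `(u, v)` and `(w, v)` with `u < v < w` in the order and `w` not a
descendant of `v` in `T`. -/
def LowHighOn (A : V → V → Prop) (s : V) (T : ParentTree V) (ord : V → ℕ) :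
    Prop :=
  IsTreePreorder T ord ∧
  ∀ v : V, v ≠ s → (A (T.parent v) v ∨
    ∃ u w : V, A u v ∧ A w v ∧ ord u < ord v ∧ ord v < ord w ∧ ¬ T.Anc v w)

/-- A low-high order of `T` on the flow graph `G`. -/
def LowHigh (G : FlowGraph V) (T : ParentTree V) (ord : V → ℕ) : Prop :=
  LowHighOn G.A G.s T ord

/-- `B` is (the arc relation of) a spanning tree of `G` rooted at `s`: a
subgraph of `G` in which no arc enters `s`, every vertex other than `s` has
exactly one entering arc, and every vertex is reachable from `s`. -/
def IsSpanningTree (G : FlowGraph V) (B : V → V → Prop) : Prop :=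
  (∀ u v : V, B u v → G.A u v) ∧
  (∀ v : V, ¬ B v G.s) ∧
  (∀ v : V, v ≠ G.s → ∃! u : V, B u v) ∧
  (∀ v : V, ∃ p : List V, IsWalk B G.s v p)

/-- Spanning trees `B` and `R` of `G` rooted at `s` are independent: for every
vertex `v`, the paths from `s` to `v` in `B` and in `R` have in common only
dominators of `v`. -/
def Independent (G : FlowGraph V) (B R : V → V → Prop) : Prop :=
  ∀ v : V, ∀ p q : List V, IsWalk B G.s v p → IsWalk R G.s v q →
    ∀ x : V, x ∈ p → x ∈ q → G.Dom x v

/-- Spanning trees `B` and `R` of `G` rooted at `s` are strongly independent: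
for every pair of vertices `v`, `w`, either the path from `s` to `v` in `B` and
the path from `s` to `w` in `R` have in common only common dominators of `v`
and `w`, or the same holds with the roles of `B` and `R` exchanged. -/
def StronglyIndependent (G : FlowGraph V) (B R : V → V → Prop) : Prop :=
  ∀ v w : V,
    (∀ p q : List V, IsWalk B G.s v p → IsWalk R G.s w q →
      ∀ x : V, x ∈ p → x ∈ q → G.Dom x v ∧ G.Dom x w) ∨
    (∀ p q : List V, IsWalk R G.s v p → IsWalk B G.s w q →
      ∀ x : V, x ∈ p → x ∈ q → G.Dom x v ∧ G.Dom x w)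

/-- `IsDerivedArcOf G T v b a`: `(a, b)` is the derived arc of the arc `(v, b)`
of `G` with respect to `T`: `b` is not an ancestor of `v` in `T`, and `a = v`
if `v` is the parent of `b`, while otherwise `a` is the sibling of `b` in `T`
that is an ancestor of `v`. -/
def IsDerivedArcOf (G : FlowGraph V) (T : ParentTree V) (v b a : V) : Prop :=
  G.A v b ∧ ¬ T.Anc b v ∧
    ((v = T.parent b ∧ a = v) ∨
     (v ≠ T.parent b ∧ a ≠ T.root ∧ T.parent a = T.parent b ∧ T.Anc a v))

/-- The arc relation of the derived graph of `G` with respect to `T`. -/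
def DerivedArc (G : FlowGraph V) (T : ParentTree V) (a b : V) : Prop :=
  ∃ v : V, IsDerivedArcOf G T v b a

/-- `S` is the vertex set of a strongly connected subgraph of the digraph with
arc relation `A`. -/
def StronglyConnectedSet (A : V → V → Prop) (S : Set V) : Prop :=
  S.Nonempty ∧ ∀ u ∈ S, ∀ v ∈ S, ∃ p : List V,
    IsWalk A u v p ∧ ∀ x ∈ p, x ∈ S

/-- `G` is reducible: every strongly connected subgraph has a single entry
vertex, i.e. a vertex of the subgraph contained in every path from `s` to a
vertex of the subgraph. -/
def Reducible (G : FlowGraph V) : Prop :=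
  ∀ S : Set V, StronglyConnectedSet G.A S →
    ∃ v ∈ S, ∀ u ∈ S, ∀ p : List V, IsWalk G.A G.s u p → v ∈ p

/-- A digraph is acyclic if it has no cycle (a path from a vertex to itself
with at least one arc). -/
def Acyclic (A : V → V → Prop) : Prop :=
  ¬ ∃ (v : V) (p : List V), IsWalk A v v p ∧ 2 ≤ p.length

/-- `IsHighWalk A ν u v p`: `p` is a high path from `u` to `v`: a path all of
whose vertices other than `u` and `v` are greater (in the numbering `ν`) than
both `u` and `v`. -/
def IsHighWalk (A : V → V → Prop) (ν : V → ℕ) (u v : V) (p : List V) : Prop :=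
  IsWalk A u v p ∧ ∀ x ∈ p, x ≠ u → x ≠ v → ν u < ν x ∧ ν v < ν x

/-!
If `T` is rooted at `s` and has the parent property, then every vertex is reachable in `G` from each
of its ancestors in `T`: along a walk from `s`, an arc `(v, w)` adds no ancestor other than `w`
itself, because the proper ancestors of `w` are ancestors of `t(w)`, which is an ancestor of `v`.
The tail of the derived arc of `(v, w)` is an ancestor of `v`, so every derived arc can be replaced
by a walk of `G` ending in the arc `(v, w)`, and a derived cycle expands to a cycle of `G`.
-/

section Walk

variable {A B : V → V → Prop} {u v : V}

theorem isWalk_iff_exists_cons {p : List V} :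
    IsWalk A u v p ↔
      ∃ l, p = u :: l ∧ (u :: l).IsChain A ∧ (u :: l).getLast (List.cons_ne_nil u l) = v := by
  constructor
  · rintro ⟨hchain, hhead, hlast⟩
    obtain ⟨l, rfl⟩ := List.head?_eq_some_iff.1 hhead
    exact ⟨l, rfl, hchain, by simpa only [List.getLast?_eq_some_getLast (List.cons_ne_nil u l),
      Option.some.injEq] using hlast⟩
  · rintro ⟨l, rfl, hchain, rfl⟩
    exact ⟨hchain, rfl, List.getLast?_eq_some_getLast _⟩

theorem exists_isWalk_iff_reflTransGen :
    (∃ p, IsWalk A u v p) ↔ Relation.ReflTransGen A u v := by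
  simp only [isWalk_iff_exists_cons]
  constructor
  · rintro ⟨_, l, rfl, hchain, hlast⟩
    exact List.relationReflTransGen_of_exists_isChain_cons l hchain hlast
  · intro h
    obtain ⟨l, hl⟩ := List.exists_isChain_cons_of_relationReflTransGen h
    exact ⟨u :: l, l, rfl, hl⟩

theorem isWalk_cons_cons {x y : V} {l : List V} :
    IsWalk A u v (x :: y :: l) ↔ x = u ∧ A x y ∧ IsWalk A y v (y :: l) := by
  constructor
  · rintro ⟨hchain, hhead, hlast⟩
    obtain ⟨harc, htail⟩ := List.isChain_cons_cons.1 hchain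
    exact ⟨Option.some.inj hhead, harc, htail, rfl, List.getLast?_cons_cons ▸ hlast⟩
  · rintro ⟨rfl, harc, htail, -, hlast⟩
    exact ⟨List.isChain_cons_cons.2 ⟨harc, htail⟩, rfl, List.getLast?_cons_cons.trans hlast⟩

theorem exists_isWalk_two_le_length_iff_transGen :
    (∃ p, IsWalk A u v p ∧ 2 ≤ p.length) ↔ Relation.TransGen A u v := by
  simp only [Relation.TransGen.head'_iff, ← exists_isWalk_iff_reflTransGen]
  constructor
  · rintro ⟨_ | ⟨x, _ | ⟨y, l⟩⟩, hp, hlen⟩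
    · simp at hlen
    · simp at hlen
    · obtain ⟨rfl, harc, hwalk⟩ := isWalk_cons_cons.1 hp
      exact ⟨y, harc, y :: l, hwalk⟩
  · rintro ⟨y, harc, p, hp⟩
    obtain ⟨l, rfl, -⟩ := isWalk_iff_exists_cons.1 hp
    exact ⟨u :: y :: l, isWalk_cons_cons.2 ⟨rfl, harc, hp⟩, by simp⟩

theorem acyclic_iff_forall_not_transGen : Acyclic A ↔ ∀ v, ¬ Relation.TransGen A v v := by
  simp only [Acyclic, exists_isWalk_two_le_length_iff_transGen, not_exists]

theorem Acyclic.of_le_transGen (hA : Acyclic A) (hBA : B ≤ Relation.TransGen A) : Acyclic B := by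
  rw [acyclic_iff_forall_not_transGen] at hA ⊢
  exact fun v hv => hA v (Relation.TransGen.closed hBA v v hv)

end Walk

namespace ParentTree

variable {T : ParentTree V} {a b c : V}

theorem Anc.refl (T : ParentTree V) (a : V) : T.Anc a a :=
  ⟨0, rfl⟩

theorem Anc.trans : T.Anc a b → T.Anc b c → T.Anc a c := by
  rintro ⟨m, rfl⟩ ⟨n, rfl⟩
  exact ⟨m + n, Function.iterate_add_apply _ m n c⟩

theorem Anc.eq_root : T.Anc a T.root → a = T.root := by
  rintro ⟨n, rfl⟩
  exact Function.iterate_fixed T.parent_root n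

theorem Anc.eq_or_anc_parent : T.Anc a b → a = b ∨ T.Anc a (T.parent b) := by
  rintro ⟨_ | n, rfl⟩
  · exact .inl rfl
  · exact .inr ⟨n, rfl⟩

end ParentTree

section Derived

variable {G : FlowGraph V} {T : ParentTree V} {a b v w : V}

theorem ParentProperty.eq_or_anc_of_arc (hpp : ParentProperty G T) (harc : G.A v w)
    (ha : T.Anc a w) : a = w ∨ T.Anc a v :=
  ha.eq_or_anc_parent.imp_right fun ha' => ha'.trans (hpp v w harc)

theorem ParentProperty.reflTransGen_of_anc (hpp : ParentProperty G T) (hroot : T.root = G.s)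
    (ha : T.Anc a w) : Relation.ReflTransGen G.A a w := by
  have hreach : Relation.ReflTransGen G.A G.s w := exists_isWalk_iff_reflTransGen.1 (G.reach w)
  induction hreach with
  | refl =>
    rw [← hroot] at ha ⊢
    rw [ha.eq_root]
  | tail _ harc ih =>
    obtain rfl | hav := hpp.eq_or_anc_of_arc harc ha
    · exact .refl
    · exact (ih hav).tail harc

theorem IsDerivedArcOf.anc : IsDerivedArcOf G T v b a → T.Anc a v := by
  rintro ⟨-, -, ⟨-, rfl⟩ | ⟨-, -, -, hav⟩⟩
  · exact .refl T a
  · exact hav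

theorem DerivedArc.transGen (h : DerivedArc G T a b) (hroot : T.root = G.s)
    (hpp : ParentProperty G T) : Relation.TransGen G.A a b := by
  obtain ⟨v, hv⟩ := h
  exact .tail' (hpp.reflTransGen_of_anc hroot hv.anc) hv.1

end Derived

theorem stmt11_general (G : FlowGraph V) (T : ParentTree V)
    (hroot : T.root = G.s) (hpp : ParentProperty G T)
    (hacyc : Acyclic G.A) :
    Acyclic (DerivedArc G T) :=
  hacyc.of_le_transGen fun _ _ h => h.transGen hroot hpp

/-- If `T` has the parent property and `G` is acyclic, then the derived graph
of `G` with respect to `T` is acyclic. -/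
theorem stmt11 [Fintype V] (G : FlowGraph V) (T : ParentTree V)
    (hroot : T.root = G.s) (hpp : ParentProperty G T)
    (hacyc : Acyclic G.A) :
    Acyclic (DerivedArc G T) :=
  stmt11_general G T hroot hpp hacyc
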